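/- Let b ≥ 5 be squarefree and a a positive rational not an integral power of b. Then the cyclomatic complexity of the leading digit sequence S_{a,b}, defined as e − n + p of its transition graph, equals c_{a,b} + 1, where c_{a,b} is the slope of p_{a,b}(n). In particular, the transition graph has p_{a,b}(1) vertices, p_{a,b}(2) edges, and exactly one connected component. -/

import Mathlib

/-!
Put `D = {d * b ^ j : 1 ≤ d < b, j ∈ ℤ}` and let `digitFloor b x` be the largest element of `D`
that is at most `x`. The edges are the values at `x = a ^ m` of the pair
`(leadingDigit b x, leadingDigit b (a * x))`. This pair is invariant under `x ↦ b * x` and locally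
constant to the right, and `log_b a` is irrational, so the edges are exactly the values of the pair
on `(0, ∞)`.

The pair at `x` is already attained at `max (digitFloor b x) (digitFloor b (a * x) / a)`, which is a
point where `x ∈ D` or `a * x ∈ D`; conversely, when `4 ≤ b`, such a point of `[1, b)` is determined
by its pair. Inclusion-exclusion over the two conditions gives `2 * (b - 1)` edges, minus the number
of `x` in `[1, b)` satisfying both, which is elementary divisibility.
-/

/-- The leading digit of `x` in base `b`: the unique `d ∈ {1,…,b-1}` with
`d · b^k ≤ x < (d+1) · b^k` for some integer `k` (here `k = ⌊log_b x⌋`). -/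
noncomputable def leadingDigit (b : ℕ) (x : ℝ) : ℕ :=
  (⌊x / (b : ℝ) ^ (⌊Real.logb b x⌋ : ℤ)⌋).toNat

/-- The block complexity of the leading digit sequence of `a^n` in base `b`:
the number of distinct blocks of length `n`. -/
noncomputable def blockComplexity (a : ℝ) (b : ℕ) (n : ℕ) : ℕ :=
  Set.ncard {w : Fin n → ℕ |
    ∃ m : ℕ, 1 ≤ m ∧ ∀ i : Fin n, w i = leadingDigit b (a ^ (m + (i : ℕ)))}

/-- Vertices of the transition graph of the leading digit sequence of `a^n` in base
`b`: the digits that occur in the sequence. -/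
noncomputable def transVertices (a : ℝ) (b : ℕ) : Set ℕ :=
  {d : ℕ | ∃ m : ℕ, 1 ≤ m ∧ leadingDigit b (a ^ m) = d}

/-- Edges of the transition graph: pairs of digits occurring consecutively. -/
noncomputable def transEdges (a : ℝ) (b : ℕ) : Set (ℕ × ℕ) :=
  {e : ℕ × ℕ | ∃ m : ℕ, 1 ≤ m ∧
    leadingDigit b (a ^ m) = e.1 ∧ leadingDigit b (a ^ (m + 1)) = e.2}

open Set Filter Topology

section IrrationalLogarithm

theorem irrational_logb_of_squarefree {b : ℕ} (hb : 1 < b) (hsf : Squarefree b) {a : ℚ}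
    (ha : 0 < a) (hnp : ∀ j : ℤ, (a : ℝ) ≠ (b : ℝ) ^ j) : Irrational (Real.logb b a) := by
  have hb1 : (1 : ℝ) < b := mod_cast hb
  have ha' : (0 : ℝ) < a := mod_cast ha
  rintro ⟨q, hq⟩
  have a_eq : (a : ℝ) = (b : ℝ) ^ (q : ℝ) := by
    rw [hq, Real.rpow_logb (by positivity) hb1.ne' ha']
  have pow_eq : a ^ q.den = (b : ℚ) ^ q.num := by
    have hq_mul : (q : ℝ) * q.den = q.num := mod_cast q.mul_den_eq_num
    apply Rat.cast_injective (α := ℝ)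
    push_cast
    rw [a_eq, ← Real.rpow_mul_natCast (by positivity), hq_mul, Real.rpow_intCast]
  obtain ⟨p, hp, hpb⟩ := Nat.exists_prime_and_dvd hb.ne'
  have : Fact p.Prime := ⟨hp⟩
  have val_b : padicValRat p b = 1 := by
    have le_one := (Nat.squarefree_iff_factorization_le_one (by lia)).1 hsf p
    have one_le := (hp.dvd_iff_one_le_factorization (by lia)).1 hpb
    rw [padicValRat.of_nat, ← Nat.factorization_def b hp]
    lia
  have val_eq : q.den * padicValRat p a = q.num := by
    simpa [val_b] using congrArg (padicValRat p) pow_eq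
  have q_eq : q = (padicValRat p a : ℚ) := by
    rw [← q.num_div_den, ← val_eq]
    push_cast
    field_simp
  refine hnp (padicValRat p a) ?_
  rw [a_eq, q_eq, Rat.cast_intCast, Real.rpow_intCast]

theorem exists_nat_mul_add_int_mem_Ioo {α : ℝ} (hα : Irrational α) {u v : ℝ}
    (huv : u < v) : ∃ m : ℕ, 1 ≤ m ∧ ∃ j : ℤ, m * α + j ∈ Ioo u v := by
  have : Fact ((0 : ℝ) < 1) := ⟨one_pos⟩
  obtain ⟨w, hw⟩ := nonempty_Ioo.2 huv
  have hdense : DenseRange (fun n : ℤ => n • (α : AddCircle (1 : ℝ))) :=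
    AddCircle.denseRange_zsmul_coe_iff.2 (by simpa using hα)
  have hcluster : MapClusterPt (w : AddCircle (1 : ℝ)) atTop
      (fun n : ℕ => n • (α : AddCircle (1 : ℝ))) :=
    ((mapClusterPt_atTop_nsmul_tfae _ _).out 0 3).2 (hdense w)
  have hnhds : ((↑) : ℝ → AddCircle (1 : ℝ)) '' Ioo u v ∈ 𝓝 (w : AddCircle (1 : ℝ)) :=
    QuotientAddGroup.isOpenMap_coe.image_mem_nhds (isOpen_Ioo.mem_nhds hw)
  obtain ⟨m, hm, t, ht, hmt⟩ :=
    frequently_atTop.1 (mapClusterPt_iff_frequently.1 hcluster _ hnhds) 1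
  have hzero : ((t - m * α : ℝ) : AddCircle (1 : ℝ)) = 0 := by
    rw [AddCircle.coe_sub, hmt, ← nsmul_eq_mul, AddCircle.coe_nsmul, sub_self]
  obtain ⟨j, hj⟩ := (AddCircle.coe_eq_zero_iff 1).1 hzero
  rw [zsmul_one] at hj
  exact ⟨m, hm, j, by rwa [hj, add_sub_cancel]⟩

theorem exists_pow_mul_zpow_mem_Ioo {b a : ℝ} (hb : 1 < b) (ha : 0 < a)
    (hirr : Irrational (Real.logb b a)) {u v : ℝ} (hu : 0 < u) (huv : u < v) :
    ∃ m : ℕ, 1 ≤ m ∧ ∃ j : ℤ, a ^ m * b ^ j ∈ Ioo u v := by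
  have hb0 : 0 < b := by linarith
  obtain ⟨m, hm, j, hlt⟩ := exists_nat_mul_add_int_mem_Ioo hirr
    (Real.logb_lt_logb hb hu huv)
  refine ⟨m, hm, j, ?_⟩
  have hlog : Real.logb b (a ^ m * b ^ j) = m * Real.logb b a + j := by
    rw [Real.logb_mul (by positivity) (by positivity), Real.logb_pow, ← Real.rpow_intCast,
      Real.logb_rpow hb0 hb.ne']
  rw [← hlog] at hlt
  exact ⟨(Real.logb_lt_logb_iff hb hu (by positivity)).1 hlt.1,
    (Real.logb_lt_logb_iff hb (by positivity) (hu.trans huv)).1 hlt.2⟩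

end IrrationalLogarithm

section DigitCells

variable {b d : ℕ} {j : ℤ} {x y : ℝ}

/-- The interval `[d * b ^ j, (d + 1) * b ^ j)`. For `1 ≤ d < b` these intervals partition `(0, ∞)`
into the maximal intervals on which the leading digit and the exponent in base `b` are constant. -/
def digitCell (b d : ℕ) (j : ℤ) : Set ℝ :=
  Ico (d * (b : ℝ) ^ j) ((d + 1) * (b : ℝ) ^ j)

/-- The number `x` with all its base-`b` digits after the leading one replaced by zeros: the left
endpoint of the digit cell containing `x`. -/
noncomputable def digitFloor (b : ℕ) (x : ℝ) : ℝ :=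
  leadingDigit b x * (b : ℝ) ^ Int.log b x

theorem leadingDigit_eq_floor (hx : 0 ≤ x) :
    leadingDigit b x = ⌊x / (b : ℝ) ^ Int.log b x⌋₊ := by
  rw [leadingDigit, Real.floor_logb_natCast hx, Int.floor_toNat]

theorem mem_digitCell (hb : 1 < b) (hx : 0 < x) :
    x ∈ digitCell b (leadingDigit b x) (Int.log b x) := by
  have hpow : (0 : ℝ) < (b : ℝ) ^ Int.log b x := by positivity
  rw [leadingDigit_eq_floor hx.le]
  exact ⟨(le_div_iff₀ hpow).1 (Nat.floor_le (by positivity)),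
    (div_lt_iff₀ hpow).1 (Nat.lt_floor_add_one _)⟩

theorem digitFloor_le (hb : 1 < b) (hx : 0 < x) : digitFloor b x ≤ x :=
  (mem_digitCell hb hx).1

theorem one_le_leadingDigit (hb : 1 < b) (hx : 0 < x) : 1 ≤ leadingDigit b x := by
  rw [leadingDigit_eq_floor hx.le, Nat.one_le_floor_iff, one_le_div (by positivity)]
  exact Int.zpow_log_le_self hb hx

theorem leadingDigit_lt (hb : 1 < b) (hx : 0 < x) : leadingDigit b x < b := by
  rw [leadingDigit_eq_floor hx.le, Nat.floor_lt (by positivity), div_lt_iff₀ (by positivity),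
    ← zpow_one_add₀ (by positivity), add_comm]
  exact Int.lt_zpow_succ_log_self hb x

theorem log_eq_of_mem_digitCell (hd : 1 ≤ d) (hdb : d < b) (hx : x ∈ digitCell b d j) :
    Int.log b x = j := by
  have hb : 1 < b := by lia
  have hpow : (0 : ℝ) < (b : ℝ) ^ j := by positivity
  have hd' : (1 : ℝ) ≤ d := mod_cast hd
  have hdb' : (d : ℝ) + 1 ≤ b := mod_cast hdb
  have hle : (b : ℝ) ^ j ≤ x := (le_mul_of_one_le_left hpow.le hd').trans hx.1
  have hlt : x < (b : ℝ) ^ (j + 1) := by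
    rw [zpow_add_one₀ (by positivity), mul_comm]
    exact hx.2.trans_le (mul_le_mul_of_nonneg_right hdb' hpow.le)
  have hx0 : 0 < x := hpow.trans_le hle
  have := (Int.zpow_le_iff_le_log hb hx0).1 hle
  have := (Int.lt_zpow_iff_log_lt hb hx0).1 hlt
  lia

theorem leadingDigit_eq_of_mem_digitCell (hd : 1 ≤ d) (hdb : d < b) (hx : x ∈ digitCell b d j) :
    leadingDigit b x = d := by
  have hb : 0 < b := by lia
  have hpow : (0 : ℝ) < (b : ℝ) ^ j := by positivity
  have hx0 : 0 ≤ x := le_trans (by positivity) hx.1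
  rw [leadingDigit_eq_floor hx0, log_eq_of_mem_digitCell hd hdb hx,
    Nat.floor_eq_iff (by positivity), le_div_iff₀ hpow, div_lt_iff₀ hpow]
  exact hx

theorem leadingDigit_digit_mul_zpow (hd : 1 ≤ d) (hdb : d < b) :
    leadingDigit b (d * (b : ℝ) ^ j) = d :=
  have hb : 0 < b := by lia
  leadingDigit_eq_of_mem_digitCell hd hdb ⟨le_rfl, by gcongr; exact lt_add_one _⟩

theorem digitFloor_digit_mul_zpow (hd : 1 ≤ d) (hdb : d < b) :
    digitFloor b (d * (b : ℝ) ^ j) = d * (b : ℝ) ^ j := by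
  have hb : 0 < b := by lia
  rw [digitFloor, leadingDigit_digit_mul_zpow hd hdb, log_eq_of_mem_digitCell (j := j) hd hdb
    ⟨le_rfl, by gcongr; exact lt_add_one _⟩]

theorem mul_zpow_mem_digitCell (hb : 0 < b) (hx : x ∈ digitCell b d j) (i : ℤ) :
    x * (b : ℝ) ^ i ∈ digitCell b d (j + i) := by
  rw [digitCell, zpow_add₀ (by positivity), ← mul_assoc, ← mul_assoc]
  exact ⟨mul_le_mul_of_nonneg_right hx.1 (by positivity),
    mul_lt_mul_of_pos_right hx.2 (by positivity)⟩

theorem leadingDigit_mul_zpow (hb : 1 < b) (hx : 0 < x) (i : ℤ) :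
    leadingDigit b (x * (b : ℝ) ^ i) = leadingDigit b x :=
  leadingDigit_eq_of_mem_digitCell (one_le_leadingDigit hb hx) (leadingDigit_lt hb hx)
    (mul_zpow_mem_digitCell (by lia) (mem_digitCell hb hx) i)

theorem log_mul_zpow (hb : 1 < b) (hx : 0 < x) (i : ℤ) :
    Int.log b (x * (b : ℝ) ^ i) = Int.log b x + i :=
  log_eq_of_mem_digitCell (one_le_leadingDigit hb hx) (leadingDigit_lt hb hx)
    (mul_zpow_mem_digitCell (by lia) (mem_digitCell hb hx) i)

theorem digitFloor_mul_zpow (hb : 1 < b) (hx : 0 < x) (i : ℤ) :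
    digitFloor b (x * (b : ℝ) ^ i) = digitFloor b x * (b : ℝ) ^ i := by
  rw [digitFloor, digitFloor, leadingDigit_mul_zpow hb hx, log_mul_zpow hb hx,
    zpow_add₀ (by positivity), mul_assoc]

theorem digitFloor_mul_zpow_eq_self_iff (hb : 1 < b) (hx : 0 < x) (i : ℤ) :
    digitFloor b (x * (b : ℝ) ^ i) = x * (b : ℝ) ^ i ↔ digitFloor b x = x := by
  rw [digitFloor_mul_zpow hb hx, mul_left_inj' (by positivity)]

theorem leadingDigit_eq_of_mem_Icc_digitFloor (hb : 1 < b) (hx : 0 < x)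
    (hy : y ∈ Icc (digitFloor b x) x) : leadingDigit b y = leadingDigit b x :=
  leadingDigit_eq_of_mem_digitCell (one_le_leadingDigit hb hx) (leadingDigit_lt hb hx)
    ⟨hy.1, hy.2.trans_lt (mem_digitCell hb hx).2⟩

theorem leadingDigit_eventuallyEq_nhdsGE (hb : 1 < b) (hx : 0 < x) :
    ∀ᶠ y in 𝓝[≥] x, leadingDigit b y = leadingDigit b x := by
  have hcell := mem_digitCell hb hx
  filter_upwards [Ico_mem_nhdsGE hcell.2] with y hy
  exact leadingDigit_eq_of_mem_digitCell (one_le_leadingDigit hb hx) (leadingDigit_lt hb hx)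
    ⟨hcell.1.trans hy.1, hy.2⟩

-- If the exponents differed, `y / x` would exceed `d * b / (d + 1) ≥ b / 2 ≥ 2`.
theorem digitFloor_eq_of_leadingDigit_eq (hb : 4 ≤ b) (hx : 0 < x) (hxy : x ≤ y)
    (hyx : y < 2 * x) (hdigit : leadingDigit b x = leadingDigit b y) :
    digitFloor b x = digitFloor b y := by
  have hlog : Int.log b x = Int.log b y := by
    refine (Int.log_mono_right hx hxy).antisymm (not_lt.1 fun hlt => hyx.not_ge ?_)
    have hb4 : (4 : ℝ) ≤ b := mod_cast hb
    have hd : (1 : ℝ) ≤ leadingDigit b x := mod_cast one_le_leadingDigit (by lia) hx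
    calc 2 * x
      _ ≤ 2 * ((leadingDigit b x + 1) * (b : ℝ) ^ Int.log b x) := by
          gcongr
          exact (mem_digitCell (by lia) hx).2.le
      _ ≤ leadingDigit b x * b * (b : ℝ) ^ Int.log b x := by
          rw [← mul_assoc]
          exact mul_le_mul_of_nonneg_right (by nlinarith) (by positivity)
      _ = leadingDigit b y * (b : ℝ) ^ (Int.log b x + 1) := by
          rw [hdigit, zpow_add_one₀ (by positivity)]
          ring
      _ ≤ leadingDigit b y * (b : ℝ) ^ Int.log b y := by
          gcongr
          · linarith
          · exact hlt
      _ ≤ y := digitFloor_le (by lia) (hx.trans_le hxy)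
  rw [digitFloor, digitFloor, hdigit, hlog]

theorem log_eq_zero_of_mem_Ico (hb : 1 < b) (hx : x ∈ Ico 1 (b : ℝ)) : Int.log b x = 0 := by
  have hx0 : 0 < x := one_pos.trans_le hx.1
  have := (Int.zpow_le_iff_le_log hb hx0).1 (by simpa using hx.1 : (b : ℝ) ^ (0 : ℤ) ≤ x)
  have := (Int.lt_zpow_iff_log_lt hb hx0).1 (by simpa using hx.2 : x < (b : ℝ) ^ (1 : ℤ))
  lia

theorem digitFloor_eq_leadingDigit (hb : 1 < b) (hx : x ∈ Ico 1 (b : ℝ)) :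
    digitFloor b x = leadingDigit b x := by
  rw [digitFloor, log_eq_zero_of_mem_Ico hb hx, zpow_zero, mul_one]

theorem exists_natCast_eq_of_digitFloor_eq_self (hx : 1 ≤ x) (h : digitFloor b x = x) :
    ∃ n : ℕ, x = n := by
  refine ⟨leadingDigit b x * b ^ Nat.log b ⌊x⌋₊, ?_⟩
  rw [digitFloor, Int.log_of_one_le_right b hx, zpow_natCast] at h
  exact_mod_cast h.symm

theorem digitFloor_natCast_eq_self_iff {n : ℕ} (hn : 0 < n) (hnb : n < b * b) :
    digitFloor b n = n ↔ n < b ∨ b ∣ n := by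
  have hb : 1 < b := by nlinarith
  constructor
  · intro h
    rw [digitFloor, Int.log_natCast, zpow_natCast] at h
    norm_cast at h
    rcases eq_or_ne (Nat.log b n) 0 with hlog | hlog
    · exact .inl ((Nat.log_eq_zero_iff.1 hlog).resolve_right (by lia))
    · exact .inr (h ▸ (dvd_pow_self b hlog).mul_left _)
  · rintro (hlt | ⟨d, rfl⟩)
    · simpa using digitFloor_digit_mul_zpow (j := 0) hn hlt
    · have hd : 1 ≤ d := Nat.pos_of_mul_pos_left hn
      have hdb : d < b := lt_of_mul_lt_mul_left hnb (by lia)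
      simpa [mul_comm] using digitFloor_digit_mul_zpow (j := 1) hd hdb

end DigitCells

section Significand

variable {b : ℕ} {x : ℝ}

/-- The base-`b` significand of `x > 0`: the representative in `[1, b)` of `x` modulo powers
of `b`. -/
noncomputable def significand (b : ℕ) (x : ℝ) : ℝ :=
  x * (b : ℝ) ^ (-Int.log b x)

theorem significand_mem_Ico (hb : 1 < b) (hx : 0 < x) : significand b x ∈ Ico 1 (b : ℝ) := by
  rw [significand, zpow_neg, ← div_eq_mul_inv]
  constructor
  · rw [one_le_div (by positivity)]
    exact Int.zpow_log_le_self hb hx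
  · rw [div_lt_iff₀ (by positivity), ← zpow_one_add₀ (by positivity), add_comm]
    exact Int.lt_zpow_succ_log_self hb x

theorem significand_mul_zpow (hb : 1 < b) (hx : 0 < x) (i : ℤ) :
    significand b (x * (b : ℝ) ^ i) = significand b x := by
  rw [significand, log_mul_zpow hb hx, mul_assoc, ← zpow_add₀ (by positivity), significand]
  congr 2
  ring

theorem significand_eq_self (hb : 1 < b) (hx : x ∈ Ico 1 (b : ℝ)) : significand b x = x := by
  rw [significand, log_eq_zero_of_mem_Ico hb hx, neg_zero, zpow_zero, mul_one]

end Significand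

section Breakpoints

variable {b : ℕ} {a c x : ℝ}

/-- The pair of leading digits of `x` and `a * x`; at `x = a ^ m` it is an edge of the transition
graph. -/
noncomputable def digitPair (b : ℕ) (a x : ℝ) : ℕ × ℕ :=
  (leadingDigit b x, leadingDigit b (a * x))

/-- The points `x` of `[1, b)` for which `c * x` is the left endpoint of a digit cell: as `x` grows,
the digit cell of `c * x` changes at these points. -/
def breakpoints (b : ℕ) (c : ℝ) : Set ℝ :=
  {x ∈ Ico 1 (b : ℝ) | digitFloor b (c * x) = c * x}

/-- The left endpoint of the interval around `x` on which the digit cells of both `x` and `a * x`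
are constant. -/
noncomputable def leftBreakpoint (b : ℕ) (a x : ℝ) : ℝ :=
  max (digitFloor b x) (digitFloor b (a * x) / a)

theorem digitPair_mul_zpow (hb : 1 < b) (ha : 0 < a) (hx : 0 < x) (i : ℤ) :
    digitPair b a (x * (b : ℝ) ^ i) = digitPair b a x := by
  rw [digitPair, ← mul_assoc, leadingDigit_mul_zpow hb hx,
    leadingDigit_mul_zpow hb (mul_pos ha hx), digitPair]

theorem digitPair_eventuallyEq_nhdsGE (hb : 1 < b) (ha : 0 < a) (hx : 0 < x) :
    ∀ᶠ y in 𝓝[≥] x, digitPair b a y = digitPair b a x := by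
  have hmul : Tendsto (a * ·) (𝓝[≥] x) (𝓝[≥] (a * x)) :=
    (continuous_const_mul a).continuousWithinAt.tendsto_nhdsWithin
      fun _ hy => mul_le_mul_of_nonneg_left hy ha.le
  filter_upwards [leadingDigit_eventuallyEq_nhdsGE hb hx,
    hmul.eventually (leadingDigit_eventuallyEq_nhdsGE hb (mul_pos ha hx))] with y hy hay
  exact Prod.ext hy hay

theorem leftBreakpoint_le (hb : 1 < b) (ha : 0 < a) (hx : 0 < x) : leftBreakpoint b a x ≤ x :=
  max_le (digitFloor_le hb hx) ((div_le_iff₀' ha).2 (digitFloor_le hb (mul_pos ha hx)))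

theorem digitPair_leftBreakpoint (hb : 1 < b) (ha : 0 < a) (hx : 0 < x) :
    digitPair b a (leftBreakpoint b a x) = digitPair b a x := by
  have hle := leftBreakpoint_le hb ha hx
  exact Prod.ext
    (leadingDigit_eq_of_mem_Icc_digitFloor hb hx ⟨le_max_left _ _, hle⟩)
    (leadingDigit_eq_of_mem_Icc_digitFloor hb (mul_pos ha hx)
      ⟨(div_le_iff₀' ha).1 (le_max_right _ _), mul_le_mul_of_nonneg_left hle ha.le⟩)

theorem digitFloor_digitFloor (hb : 1 < b) (hx : 0 < x) :
    digitFloor b (digitFloor b x) = digitFloor b x :=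
  digitFloor_digit_mul_zpow (one_le_leadingDigit hb hx) (leadingDigit_lt hb hx)

theorem leftBreakpoint_mem (hb : 1 < b) (ha : 0 < a) (hx : x ∈ Ico 1 (b : ℝ)) :
    leftBreakpoint b a x ∈ breakpoints b 1 ∪ breakpoints b a := by
  have hx0 : 0 < x := one_pos.trans_le hx.1
  have hmem : leftBreakpoint b a x ∈ Ico 1 (b : ℝ) := by
    refine ⟨le_max_of_le_left ?_, (leftBreakpoint_le hb ha hx0).trans_lt hx.2⟩
    rw [digitFloor_eq_leadingDigit hb hx]
    exact_mod_cast one_le_leadingDigit hb hx0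
  rcases max_choice (digitFloor b x) (digitFloor b (a * x) / a) with h | h
  · refine .inl ⟨hmem, ?_⟩
    rw [one_mul, leftBreakpoint, h, digitFloor_digitFloor hb hx0]
  · refine .inr ⟨hmem, ?_⟩
    rw [leftBreakpoint, h, mul_div_cancel₀ _ ha.ne', digitFloor_digitFloor hb (mul_pos ha hx0)]

theorem leftBreakpoint_eq_self (hb : 1 < b) (ha : 0 < a)
    (hx : x ∈ breakpoints b 1 ∪ breakpoints b a) : leftBreakpoint b a x = x := by
  rcases hx with ⟨hx, h⟩ | ⟨hx, h⟩ <;> have hx0 : 0 < x := one_pos.trans_le hx.1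
  · rw [one_mul] at h
    rw [leftBreakpoint, h, max_eq_left]
    exact (div_le_iff₀' ha).2 (digitFloor_le hb (mul_pos ha hx0))
  · rw [leftBreakpoint, h, mul_div_cancel_left₀ _ ha.ne', max_eq_right (digitFloor_le hb hx0)]

theorem leftBreakpoint_eq_of_digitPair_eq (hb : 4 ≤ b) (ha : 0 < a) {y : ℝ}
    (hx : x ∈ Ico 1 (b : ℝ)) (hy : y ∈ Ico 1 (b : ℝ)) (h : digitPair b a x = digitPair b a y) :
    leftBreakpoint b a x = leftBreakpoint b a y := by
  wlog hxy : x ≤ y generalizing x y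
  · exact (this hy hx h.symm (le_of_not_ge hxy)).symm
  have hb1 : 1 < b := by lia
  have hx0 : 0 < x := one_pos.trans_le hx.1
  obtain ⟨hdigit, hdigit'⟩ := Prod.mk.inj h
  have hyx : y < 2 * x := by
    have hd : (1 : ℝ) ≤ leadingDigit b x := mod_cast one_le_leadingDigit hb1 hx0
    have hdx := digitFloor_eq_leadingDigit hb1 hx ▸ digitFloor_le hb1 hx0
    have hyd := (mem_digitCell hb1 (hx0.trans_le hxy)).2
    rw [← hdigit, log_eq_zero_of_mem_Ico hb1 hy, zpow_zero, mul_one] at hyd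
    linarith
  rw [leftBreakpoint, leftBreakpoint, digitFloor_eq_of_leadingDigit_eq hb hx0 hxy hyx hdigit,
    digitFloor_eq_of_leadingDigit_eq hb (mul_pos ha hx0) (mul_le_mul_of_nonneg_left hxy ha.le)
      (by nlinarith) hdigit']

theorem injOn_digitPair_breakpoints (hb : 4 ≤ b) (ha : 0 < a) :
    InjOn (digitPair b a) (breakpoints b 1 ∪ breakpoints b a) := by
  intro x hx y hy h
  rw [← leftBreakpoint_eq_self (by lia) ha hx, ← leftBreakpoint_eq_self (by lia) ha hy]
  exact leftBreakpoint_eq_of_digitPair_eq hb ha (hx.elim And.left And.left)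
    (hy.elim And.left And.left) h

theorem image_digitPair_breakpoints (hb : 1 < b) (ha : 0 < a) :
    digitPair b a '' (breakpoints b 1 ∪ breakpoints b a) = digitPair b a '' Ioi 0 := by
  refine (image_mono ?_).antisymm ?_
  · rintro x (hx | hx) <;> exact one_pos.trans_le hx.1.1
  · rintro _ ⟨x, hx, rfl⟩
    have hsig := significand_mem_Ico hb hx
    refine ⟨_, leftBreakpoint_mem hb ha hsig, ?_⟩
    rw [digitPair_leftBreakpoint hb ha (one_pos.trans_le hsig.1), significand,
      digitPair_mul_zpow hb ha hx]

theorem bijOn_leadingDigit_breakpoints (hb : 1 < b) (hc : 0 < c) :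
    BijOn (fun x => leadingDigit b (c * x)) (breakpoints b c) (Icc 1 (b - 1)) := by
  have mul_significand (d : ℕ) :
      c * significand b (d / c) = d * (b : ℝ) ^ (-Int.log b ((d : ℝ) / c)) := by
    rw [significand, ← mul_assoc, mul_div_cancel₀ _ hc.ne']
  refine InvOn.bijOn (f' := fun d : ℕ => significand b (d / c)) ⟨?_, ?_⟩ ?_ ?_
  · rintro x ⟨hx, hfloor⟩
    have hx0 : 0 < x := one_pos.trans_le hx.1
    have hdiv : (leadingDigit b (c * x) : ℝ) / c = x * (b : ℝ) ^ (-Int.log b (c * x)) := by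
      rw [digitFloor] at hfloor
      rw [zpow_neg, div_eq_iff hc.ne', mul_right_comm, ← div_eq_mul_inv,
        eq_div_iff (by positivity), hfloor, mul_comm]
    simp only [hdiv]
    rw [significand_mul_zpow hb hx0, significand_eq_self hb hx]
  · rintro d ⟨hd, hdb⟩
    simp only [mul_significand]
    exact leadingDigit_digit_mul_zpow hd (by lia)
  · rintro x ⟨hx, -⟩
    have hcx : 0 < c * x := mul_pos hc (one_pos.trans_le hx.1)
    exact ⟨one_le_leadingDigit hb hcx, Nat.le_sub_one_of_lt (leadingDigit_lt hb hcx)⟩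
  · rintro d ⟨hd, hdb⟩
    refine ⟨significand_mem_Ico hb (div_pos (mod_cast hd) hc), ?_⟩
    rw [mul_significand]
    exact digitFloor_digit_mul_zpow hd (by lia)

theorem finite_breakpoints (hb : 1 < b) (hc : 0 < c) : (breakpoints b c).Finite :=
  (bijOn_leadingDigit_breakpoints hb hc).finite_iff_finite.2 (finite_Icc _ _)

theorem ncard_breakpoints (hb : 1 < b) (hc : 0 < c) : (breakpoints b c).ncard = b - 1 := by
  rw [(bijOn_leadingDigit_breakpoints hb hc).ncard_eq, ← Finset.coe_Icc, ncard_coe_finset,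
    Nat.card_Icc, Nat.add_sub_cancel]

theorem breakpoints_mul_zpow (hb : 1 < b) (hc : 0 < c) (k : ℤ) :
    breakpoints b (c * (b : ℝ) ^ k) = breakpoints b c := by
  ext x
  refine and_congr_right fun hx => ?_
  rw [mul_right_comm, digitFloor_mul_zpow_eq_self_iff hb (mul_pos hc (one_pos.trans_le hx.1))]

end Breakpoints

section CommonBreakpoints

variable {b r s : ℕ}

theorem card_filter_dvd_mul (hb : 0 < b) :
    {t ∈ Finset.Ioc 0 ((b - 1) / s) | b ∣ r * t}.card = (Nat.gcd b r - 1) / s := by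
  have hg : 0 < Nat.gcd b r := Nat.gcd_pos_of_pos_left r hb
  have hdvd (t : ℕ) : b ∣ r * t ↔ b / Nat.gcd b r ∣ t := by
    rw [Nat.div_dvd_iff_dvd_mul (Nat.gcd_dvd_left b r) hg, Nat.dvd_gcd_mul_iff_dvd_mul]
  have hdiv : (b - 1) / (b / Nat.gcd b r) = Nat.gcd b r - 1 := by
    have := Nat.mul_sub_div 0 (b / Nat.gcd b r) (Nat.gcd b r)
      (by rwa [Nat.div_mul_cancel (Nat.gcd_dvd_left b r)])
    rwa [Nat.div_mul_cancel (Nat.gcd_dvd_left b r), Nat.zero_div] at this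
  simp only [hdvd]
  rw [Nat.Ioc_filter_dvd_card_eq_div, Nat.div_right_comm, hdiv]

theorem card_filter_lt_or_dvd_mul (hb : 0 < b) (hs : 0 < s) (hsr : s ≤ r) :
    {t ∈ Finset.Ioc 0 ((b - 1) / s) | r * t < b ∨ b ∣ r * t}.card =
      (b - 1) / r + (Nat.gcd b r - 1) / s := by
  have hlt : {t ∈ Finset.Ioc 0 ((b - 1) / s) | r * t < b} = Finset.Ioc 0 ((b - 1) / r) := by
    have hle : (b - 1) / r ≤ (b - 1) / s := Nat.div_le_div_left hsr hs
    ext t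
    have := Nat.le_div_iff_mul_le (x := t) (y := b - 1) (hs.trans_le hsr)
    rw [mul_comm t r] at this
    simp only [Finset.mem_filter, Finset.mem_Ioc]
    lia
  have hdisj : Disjoint {t ∈ Finset.Ioc 0 ((b - 1) / s) | r * t < b}
      {t ∈ Finset.Ioc 0 ((b - 1) / s) | b ∣ r * t} := by
    refine Finset.disjoint_filter.2 fun t ht hlt hdvd => hlt.not_ge (Nat.le_of_dvd ?_ hdvd)
    exact Nat.mul_pos (hs.trans_le hsr) (Finset.mem_Ioc.1 ht).1
  rw [Finset.filter_or, Finset.card_union_of_disjoint hdisj, hlt, Nat.card_Ioc, Nat.sub_zero,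
    card_filter_dvd_mul hb]

theorem digitFloor_div_mul_eq_self_iff (hs : 0 < s) (hrs : 0 < r) (hrb : r < b * s) {t : ℕ}
    (ht : 0 < t) (htb : s * t < b) :
    digitFloor b ((r : ℝ) / s * (s * t : ℕ)) = (r : ℝ) / s * (s * t : ℕ) ↔
      r * t < b ∨ b ∣ r * t := by
  have hmul : (r : ℝ) / s * (s * t : ℕ) = (r * t : ℕ) := by
    push_cast
    field_simp
  rw [hmul]
  refine digitFloor_natCast_eq_self_iff (Nat.mul_pos hrs ht) ?_
  calc r * t
    _ < b * s * t := Nat.mul_lt_mul_of_pos_right hrb ht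
    _ = b * (s * t) := mul_assoc _ _ _
    _ ≤ b * b := Nat.mul_le_mul_left b htb.le

theorem inter_breakpoints_eq_image (hb : 1 < b) (hs : 0 < s) (hco : r.Coprime s) (hsr : s ≤ r)
    (hrb : r < b * s) :
    breakpoints b 1 ∩ breakpoints b ((r : ℝ) / s) =
      (fun t : ℕ => ((s * t : ℕ) : ℝ)) ''
        ({t ∈ Finset.Ioc 0 ((b - 1) / s) | r * t < b ∨ b ∣ r * t} : Finset ℕ) := by
  have mem_Ioc_iff (t : ℕ) : t ∈ Finset.Ioc 0 ((b - 1) / s) ↔ 0 < t ∧ s * t < b := by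
    rw [Finset.mem_Ioc, Nat.le_div_iff_mul_le hs, mul_comm]
    lia
  ext x
  simp only [Finset.coe_filter, mem_image, mem_ofPred_eq, mem_Ioc_iff]
  constructor
  · rintro ⟨⟨hx, hfloor⟩, -, hfloor'⟩
    rw [one_mul] at hfloor
    obtain ⟨d, rfl⟩ := exists_natCast_eq_of_digitFloor_eq_self hx.1 hfloor
    have hratio : 1 ≤ (r : ℝ) / s := (one_le_div (by positivity)).2 (mod_cast hsr)
    obtain ⟨n, hn⟩ := exists_natCast_eq_of_digitFloor_eq_self
      (one_le_mul_of_one_le_of_one_le hratio hx.1) hfloor'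
    have hrd : r * d = s * n := by
      field_simp at hn
      exact_mod_cast hn
    obtain ⟨t, rfl⟩ : s ∣ d := hco.symm.dvd_of_dvd_mul_left ⟨n, hrd⟩
    have ht : 0 < t := Nat.pos_of_mul_pos_left (mod_cast hx.1 : 0 < s * t)
    have htb : s * t < b := mod_cast hx.2
    exact ⟨t, ⟨⟨ht, htb⟩,
      (digitFloor_div_mul_eq_self_iff hs (hs.trans_le hsr) hrb ht htb).1 hfloor'⟩, rfl⟩
  · rintro ⟨t, ⟨⟨ht, htb⟩, hcases⟩, rfl⟩
    have hst : 0 < s * t := Nat.mul_pos hs ht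
    have hmem : ((s * t : ℕ) : ℝ) ∈ Ico 1 (b : ℝ) := ⟨mod_cast hst, mod_cast htb⟩
    refine ⟨⟨hmem, ?_⟩, hmem,
      (digitFloor_div_mul_eq_self_iff hs (hs.trans_le hsr) hrb ht htb).2 hcases⟩
    rw [one_mul]
    exact (digitFloor_natCast_eq_self_iff hst (by nlinarith)).2 (.inl htb)

theorem ncard_inter_breakpoints (hb : 1 < b) (hs : 0 < s) (hco : r.Coprime s) (hsr : s ≤ r)
    (hrb : r < b * s) :
    (breakpoints b 1 ∩ breakpoints b ((r : ℝ) / s)).ncard =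
      (b - 1) / r + (Nat.gcd b r - 1) / s := by
  have hinj : Function.Injective (fun t : ℕ => ((s * t : ℕ) : ℝ)) :=
    Nat.cast_injective.comp (mul_right_injective₀ hs.ne')
  rw [inter_breakpoints_eq_image hb hs hco hsr hrb, ncard_image_of_injective _ hinj,
    ncard_coe_finset, card_filter_lt_or_dvd_mul (by lia) hs hsr]

end CommonBreakpoints

section TransitionGraph

variable {a : ℝ} {b : ℕ}

theorem ncard_transVertices_eq_blockComplexity (a : ℝ) (b : ℕ) :
    (transVertices a b).ncard = blockComplexity a b 1 := by
  rw [blockComplexity, ← ncard_image_of_injective _ (Equiv.funUnique (Fin 1) ℕ).symm.injective,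
    Equiv.image_eq_preimage_symm]
  congr 1
  ext w
  simp [transVertices, eq_comm]

theorem ncard_transEdges_eq_blockComplexity (a : ℝ) (b : ℕ) :
    (transEdges a b).ncard = blockComplexity a b 2 := by
  rw [blockComplexity, ← ncard_image_of_injective _ (finTwoArrowEquiv ℕ).symm.injective,
    Equiv.image_eq_preimage_symm]
  congr 1
  ext w
  simp [transEdges, Fin.forall_fin_two, eq_comm]

theorem reflTransGen_transEdges (a : ℝ) (b : ℕ) : ∀ x ∈ transVertices a b, ∀ y ∈ transVertices a b,
    Relation.ReflTransGen (fun u v => (u, v) ∈ transEdges a b ∨ (v, u) ∈ transEdges a b) x y := by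
  rintro _ ⟨m, hm, rfl⟩ _ ⟨n, hn, rfl⟩
  have edge_mem (i : ℕ) (hi : 1 ≤ i) :
      (leadingDigit b (a ^ i), leadingDigit b (a ^ (i + 1))) ∈ transEdges a b := ⟨i, hi, rfl, rfl⟩
  refine Relation.ReflTransGen.lift (fun i => leadingDigit b (a ^ i)) (fun _ _ h => h) m n
    (reflTransGen_of_succ _ (fun i hi => ?_) fun i hi => ?_)
  · exact .inl (edge_mem i (hm.trans hi.1))
  · exact .inr (edge_mem i (hn.trans hi.1))

theorem transEdges_eq_image_digitPair (hb : 1 < b) (ha : 0 < a)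
    (hirr : Irrational (Real.logb b a)) : transEdges a b = digitPair b a '' Ioi 0 := by
  ext ⟨d, e⟩
  constructor
  · rintro ⟨m, -, hd, he⟩
    exact ⟨a ^ m, pow_pos ha m, Prod.ext hd (by rw [digitPair, ← pow_succ', he])⟩
  · rintro ⟨x, hx, hpair⟩
    obtain ⟨v, hxv, hconst⟩ :=
      mem_nhdsGE_iff_exists_Ico_subset.1 (digitPair_eventuallyEq_nhdsGE hb ha hx)
    obtain ⟨m, hm, j, hmem⟩ := exists_pow_mul_zpow_mem_Ioo (mod_cast hb) ha hirr hx hxv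
    have hpow : digitPair b a (a ^ m) = (d, e) := by
      rw [← digitPair_mul_zpow hb ha (pow_pos ha m) j, ← hpair]
      exact hconst (Ioo_subset_Ico_self hmem)
    rw [digitPair, ← pow_succ', Prod.mk.injEq] at hpow
    exact ⟨m, hm, hpow⟩

theorem fst_image_transEdges (a : ℝ) (b : ℕ) : Prod.fst '' transEdges a b = transVertices a b := by
  ext d
  simp [transEdges, transVertices]

theorem transVertices_eq_Icc (hb : 1 < b) (ha : 0 < a) (hirr : Irrational (Real.logb b a)) :
    transVertices a b = Icc 1 (b - 1) := by
  rw [← fst_image_transEdges, transEdges_eq_image_digitPair hb ha hirr, image_image]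
  ext d
  constructor
  · rintro ⟨x, hx, rfl⟩
    exact ⟨one_le_leadingDigit hb hx, Nat.le_sub_one_of_lt (leadingDigit_lt hb hx)⟩
  · rintro ⟨hd, hdb⟩
    refine ⟨d, mem_Ioi.2 (Nat.cast_pos.2 hd), ?_⟩
    simpa [digitPair] using leadingDigit_digit_mul_zpow (j := 0) hd (by lia : d < b)

theorem ncard_transVertices (hb : 1 < b) (ha : 0 < a) (hirr : Irrational (Real.logb b a)) :
    (transVertices a b).ncard = b - 1 := by
  rw [transVertices_eq_Icc hb ha hirr, ← Finset.coe_Icc, ncard_coe_finset, Nat.card_Icc,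
    Nat.add_sub_cancel]

theorem ncard_transEdges_add_ncard_inter (hb : 4 ≤ b) (ha : 0 < a)
    (hirr : Irrational (Real.logb b a)) :
    (transEdges a b).ncard + (breakpoints b 1 ∩ breakpoints b a).ncard = (b - 1) + (b - 1) := by
  have hb1 : 1 < b := by lia
  rw [transEdges_eq_image_digitPair hb1 ha hirr, ← image_digitPair_breakpoints hb1 ha,
    (injOn_digitPair_breakpoints hb ha).ncard_image,
    ncard_union_add_ncard_inter _ _ (finite_breakpoints hb1 one_pos) (finite_breakpoints hb1 ha),
    ncard_breakpoints hb1 one_pos, ncard_breakpoints hb1 ha]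

end TransitionGraph

theorem cyclomatic_complexity_general {b : ℕ} (hb : 4 ≤ b) {a : ℝ}
    (hirr : Irrational (Real.logb b a)) {r s : ℕ} {k : ℤ} (hs : 0 < s) (hco : r.Coprime s)
    (hrep : a = (r : ℝ) / s * (b : ℝ) ^ k) (hsr : s < r) (hrb : r < b * s) :
    (transVertices a b).ncard = blockComplexity a b 1 ∧
    (transEdges a b).ncard = blockComplexity a b 2 ∧
    (∀ x ∈ transVertices a b, ∀ y ∈ transVertices a b,
      Relation.ReflTransGen (fun u v => (u, v) ∈ transEdges a b ∨ (v, u) ∈ transEdges a b) x y) ∧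
    ((transEdges a b).ncard : ℤ) - (transVertices a b).ncard + 1 =
      ((b : ℤ) - 1 - ((b - 1) / r : ℕ) - ((Nat.gcd b r - 1) / s : ℕ)) + 1 := by
  have hb1 : 1 < b := by lia
  have hratio : 0 < (r : ℝ) / s := div_pos (mod_cast hs.trans hsr) (mod_cast hs)
  have ha : 0 < a := hrep ▸ mul_pos hratio (by positivity)
  refine ⟨ncard_transVertices_eq_blockComplexity a b, ncard_transEdges_eq_blockComplexity a b,
    reflTransGen_transEdges a b, ?_⟩
  have vertices_card := ncard_transVertices hb1 ha hirr
  have edges_card := ncard_transEdges_add_ncard_inter hb ha hirr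
  have common_card : (breakpoints b 1 ∩ breakpoints b a).ncard =
      (b - 1) / r + (Nat.gcd b r - 1) / s := by
    rw [hrep, breakpoints_mul_zpow hb1 hratio,
      ncard_inter_breakpoints hb1 hs hco hsr.le hrb]
  lia

/-- Cyclomatic complexity: For squarefree `b ≥ 5` and positive
rational `a` not an integral power of `b` (written `a = (r/s)·b^k` in lowest terms
with `1 < r/s < b`), the transition graph of the leading digit sequence has
`p_{a,b}(1)` vertices, `p_{a,b}(2)` edges, exactly one connected component, and its
cyclomatic complexity `e - n + p` equals `c_{a,b} + 1` where
`c_{a,b} = b - 1 - ⌊(b-1)/r⌋ - ⌊(gcd(b,r)-1)/s⌋`. -/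
theorem cyclomatic_complexity (b : ℕ) (hb : 5 ≤ b) (hsf : Squarefree b)
    (a : ℚ) (ha : 0 < a) (hnp : ∀ j : ℤ, (a : ℝ) ≠ (b : ℝ) ^ j)
    (r s : ℕ) (k : ℤ) (hr : 0 < r) (hs : 0 < s) (hco : Nat.Coprime r s)
    (hrep : (a : ℝ) = ((r : ℝ) / s) * (b : ℝ) ^ k)
    (h1 : (s : ℝ) < r) (h2 : (r : ℝ) < (b : ℝ) * s) :
    (transVertices (a : ℝ) b).ncard = blockComplexity (a : ℝ) b 1 ∧
    (transEdges (a : ℝ) b).ncard = blockComplexity (a : ℝ) b 2 ∧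
    (∀ x ∈ transVertices (a : ℝ) b, ∀ y ∈ transVertices (a : ℝ) b,
      Relation.ReflTransGen
        (fun u v => (u, v) ∈ transEdges (a : ℝ) b ∨ (v, u) ∈ transEdges (a : ℝ) b)
        x y) ∧
    ((transEdges (a : ℝ) b).ncard : ℤ) - (transVertices (a : ℝ) b).ncard + 1 =
      ((b : ℤ) - 1 - ((b - 1) / r : ℕ) - ((Nat.gcd b r - 1) / s : ℕ)) + 1 :=
  cyclomatic_complexity_general (by lia) (irrational_logb_of_squarefree (by lia) hsf ha hnp)
    hs hco hrep (mod_cast h1) (mod_cast h2)
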